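/- arXiv:2211.00965 — 2 statements merged into one kernel-verified Lean document; each statement's English description precedes it below -/
import Mathlib

section
/- Let R be a bounded self-adjoint operator on a complex Hilbert space X, let p ∈ X, let α ∈ ℝ, and set R_α := R + α⟨·, p⟩p (a rank-one self-adjoint perturbation of R). For a vector v, write ⟨v⟩_A for the closed linear span of {Aⁿ v : n ≥ 0}. Then: (1) ⟨p⟩_R = ⟨p⟩_{R_α}; and (2) if both R and R_α have simple spectrum (i.e. each possesses a cyclic vector, a vector whose cyclic subspace is all of X), then there exists a vector v₂ in the orthogonal complement of ⟨p⟩_R such that v := p + v₂ is simultaneously a cyclic vector for R and for R_α. -/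
open scoped InnerProductSpace

/-!
The cyclic subspace `⟨v⟩_A` is the smallest closed `A`-invariant subspace containing `v`, and `R`,
`Rα` agree modulo `p`; hence `⟨p⟩_R = ⟨p⟩_{Rα} =: K`.

Let `w` be cyclic for `R`. The projection `v₂` of `w` to `Kᗮ` generates `Kᗮ` under `R`, and also
under `Rα` because the two operators agree on `Kᗮ`. It remains to see that `p + v₂` generates `K`
and `Kᗮ` together. Let `A` be a self-adjoint operator with a cyclic vector `w`. A normal operator
`T` commuting with `A` then commutes with everything that commutes with `A`: if `Bₙ w → T w` with
`Bₙ` polynomials in `A`, then also `Bₙ* w → T* w`, since `Bₙ - T` is normal. Taking for `T` the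
projection onto `⟨u⟩_A`, every operator commuting with `A` maps `u` into `⟨u⟩_A`. Applied to the
projection onto `K` and `u = p + v₂`, this puts `p`, hence `v₂`, in `⟨p + v₂⟩_A`, for `A = R` and
for `A = Rα`.
-/

open Filter InnerProductSpace Topology

section CyclicSubspace

variable {R M : Type*} [Semiring R] [TopologicalSpace M] [AddCommMonoid M] [Module R M]
  [ContinuousAdd M] [ContinuousConstSMul R M]

/-- The cyclic subspace `⟨v⟩_A`: the closed linear span of the orbit `{Aⁿ v : n ∈ ℕ}`. The vector
`v` is cyclic for `A` when `cyclicSubspace A v = ⊤`. -/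
def cyclicSubspace (A : M →L[R] M) (v : M) : Submodule R M :=
  (Submodule.span R (Set.range fun n : ℕ => (A ^ n) v)).topologicalClosure

theorem coe_cyclicSubspace (A : M →L[R] M) (v : M) :
    (cyclicSubspace A v : Set M) =
      closure (Submodule.span R (Set.range fun n : ℕ => (A ^ n) v) : Set M) :=
  rfl

theorem isClosed_cyclicSubspace (A : M →L[R] M) (v : M) :
    IsClosed (cyclicSubspace A v : Set M) :=
  Submodule.isClosed_topologicalClosure _

theorem pow_apply_mem_cyclicSubspace (A : M →L[R] M) (v : M) (n : ℕ) :
    (A ^ n) v ∈ cyclicSubspace A v :=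
  Submodule.le_topologicalClosure _ (Submodule.subset_span ⟨n, rfl⟩)

theorem self_mem_cyclicSubspace (A : M →L[R] M) (v : M) : v ∈ cyclicSubspace A v :=
  pow_apply_mem_cyclicSubspace A v 0

theorem mapsTo_cyclicSubspace (A : M →L[R] M) (v : M) :
    Set.MapsTo A (cyclicSubspace A v) (cyclicSubspace A v) := by
  suffices cyclicSubspace A v ≤ (cyclicSubspace A v).comap (A : M →ₗ[R] M) from this
  refine Submodule.topologicalClosure_minimal _ (Submodule.span_le.mpr ?_)
    ((isClosed_cyclicSubspace A v).preimage A.continuous)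
  rintro _ ⟨n, rfl⟩
  have h := pow_apply_mem_cyclicSubspace A v (n + 1)
  rwa [pow_succ'] at h

theorem cyclicSubspace_le {A : M →L[R] M} {v : M} {N : Submodule R M}
    (hN : IsClosed (N : Set M)) (hA : Set.MapsTo A N N) (hv : v ∈ N) :
    cyclicSubspace A v ≤ N := by
  refine Submodule.topologicalClosure_minimal _ (Submodule.span_le.mpr ?_) hN
  rintro _ ⟨n, rfl⟩
  simpa only [FunLike.coe_pow_eq_iterate] using hA.iterate n hv

theorem cyclicSubspace_le_cyclicSubspace {A : M →L[R] M} {u v : M}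
    (hu : u ∈ cyclicSubspace A v) : cyclicSubspace A u ≤ cyclicSubspace A v :=
  cyclicSubspace_le (isClosed_cyclicSubspace A v) (mapsTo_cyclicSubspace A v) hu

theorem cyclicSubspace_congr {A B : M →L[R] M} {v : M}
    (h : Set.EqOn A B (cyclicSubspace A v)) : cyclicSubspace A v = cyclicSubspace B v := by
  have hBA : cyclicSubspace B v ≤ cyclicSubspace A v :=
    cyclicSubspace_le (isClosed_cyclicSubspace A v) ((mapsTo_cyclicSubspace A v).congr h)
      (self_mem_cyclicSubspace A v)
  have hAB : cyclicSubspace A v ≤ cyclicSubspace B v :=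
    cyclicSubspace_le (isClosed_cyclicSubspace B v)
      ((mapsTo_cyclicSubspace B v).congr (h.mono hBA).symm) (self_mem_cyclicSubspace B v)
  exact le_antisymm hAB hBA

theorem apply_mem_cyclicSubspace_apply {A T : M →L[R] M} (hT : Commute T A) {v x : M}
    (hx : x ∈ cyclicSubspace A v) : T x ∈ cyclicSubspace A (T v) := by
  suffices cyclicSubspace A v ≤ (cyclicSubspace A (T v)).comap (T : M →ₗ[R] M) from this hx
  refine cyclicSubspace_le ((isClosed_cyclicSubspace A (T v)).preimage T.continuous)
    (fun y hy => ?_) (self_mem_cyclicSubspace A (T v))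
  have hTA : A (T y) = T (A y) := (DFunLike.congr_fun hT.eq y).symm
  have hATy : A (T y) ∈ cyclicSubspace A (T v) := mapsTo_cyclicSubspace A (T v) hy
  rwa [hTA] at hATy

theorem eq_of_commute_of_apply_eq [T2Space M] {A S T : M →L[R] M} {w : M}
    (hw : cyclicSubspace A w = ⊤) (hS : Commute S A) (hT : Commute T A) (h : S w = T w) :
    S = T := by
  have hle : cyclicSubspace A w ≤ LinearMap.eqLocus (S : M →ₗ[R] M) (T : M →ₗ[R] M) := by
    refine cyclicSubspace_le (isClosed_eq S.continuous T.continuous) (fun x hx => ?_) h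
    calc S (A x) = A (S x) := DFunLike.congr_fun hS.eq x
      _ = A (T x) := congrArg A hx
      _ = T (A x) := (DFunLike.congr_fun hT.eq x).symm
  ext x
  exact hle (hw ▸ Submodule.mem_top)

end CyclicSubspace

section Perturbation

variable {R M : Type*} [Ring R] [TopologicalSpace M] [AddCommGroup M] [Module R M]
  [ContinuousAdd M] [ContinuousConstSMul R M]

theorem cyclicSubspace_le_of_sub_mem_span_singleton {A B : M →L[R] M} {p : M}
    (h : ∀ x, A x - B x ∈ Submodule.span R {p}) : cyclicSubspace A p ≤ cyclicSubspace B p := by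
  have hspan : Submodule.span R {p} ≤ cyclicSubspace B p :=
    (Submodule.span_singleton_le_iff_mem _ _).mpr (self_mem_cyclicSubspace B p)
  refine cyclicSubspace_le (isClosed_cyclicSubspace B p) (fun x hx => ?_)
    (self_mem_cyclicSubspace B p)
  simpa only [sub_add_cancel, SetLike.mem_coe] using
    add_mem (hspan (h x)) (mapsTo_cyclicSubspace B p hx)

theorem cyclicSubspace_eq_of_sub_mem_span_singleton {A B : M →L[R] M} {p : M}
    (h : ∀ x, A x - B x ∈ Submodule.span R {p}) : cyclicSubspace A p = cyclicSubspace B p :=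
  le_antisymm (cyclicSubspace_le_of_sub_mem_span_singleton h)
    (cyclicSubspace_le_of_sub_mem_span_singleton fun x => by
      simpa only [neg_sub] using neg_mem (h x))

end Perturbation

section Adjoin

theorem commute_star_of_isSelfAdjoint {E : Type*} [Mul E] [StarMul E] {a t : E}
    (ha : IsSelfAdjoint a) (ht : Commute t a) : Commute (star t) a := by
  simpa only [ha.star_eq] using ht.star_star

theorem coe_cyclicSubspace_eq_closure_adjoin {R M : Type*} [CommSemiring R] [TopologicalSpace M]
    [AddCommGroup M] [Module R M] [IsTopologicalAddGroup M] [ContinuousConstSMul R M]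
    (A : M →L[R] M) (v : M) :
    (cyclicSubspace A v : Set M) =
      closure ((fun B : M →L[R] M => B v) '' Algebra.adjoin R {A}) := by
  let evalAt : (M →L[R] M) →ₗ[R] M := LinearMap.applyₗ v ∘ₗ ContinuousLinearMap.coeLM R
  have hpow : (Set.range fun n : ℕ => (A ^ n) v) = evalAt '' Submonoid.closure {A} := by
    rw [← Submonoid.powers_eq_closure, Submonoid.coe_powers, ← Set.range_comp]
    rfl
  rw [cyclicSubspace, hpow, ← Submodule.map_span, ← Algebra.adjoin_eq_span]
  rfl

theorem star_mem_adjoin_singleton {R E : Type*} [CommSemiring R] [StarRing R] [Semiring E]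
    [StarRing E] [Algebra R E] [StarModule R E] {a b : E} (ha : IsSelfAdjoint a)
    (hb : b ∈ Algebra.adjoin R {a}) : star b ∈ Algebra.adjoin R {a} := by
  rwa [← Subalgebra.mem_star_iff, Subalgebra.star_adjoin_comm, Set.star_singleton, ha.star_eq]

theorem isStarNormal_sub_of_mem_adjoin_singleton {R E : Type*} [CommSemiring R] [StarRing R]
    [Ring E] [StarRing E] [Algebra R E] [StarModule R E] {a b t : E} [IsStarNormal t]
    (ha : IsSelfAdjoint a) (ht : Commute t a) (hb : b ∈ Algebra.adjoin R {a}) :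
    IsStarNormal (b - t) := by
  have hb_normal : IsStarNormal b := ⟨Algebra.commute_of_mem_adjoin_singleton_of_commute hb
    (Algebra.commute_of_mem_adjoin_self (star_mem_adjoin_singleton ha hb)).symm⟩
  have hbt : Commute b (star t) := (Algebra.commute_of_mem_adjoin_singleton_of_commute hb
    (commute_star_of_isSelfAdjoint ha ht)).symm
  exact hbt.isStarNormal_sub

end Adjoin

section Hilbert

variable {𝕜 X : Type*} [RCLike 𝕜] [NormedAddCommGroup X] [InnerProductSpace 𝕜 X]
  [CompleteSpace X] {A : X →L[𝕜] X}

instance (A : X →L[𝕜] X) (v : X) : (cyclicSubspace A v).HasOrthogonalProjection :=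
  inferInstanceAs (Submodule.topologicalClosure _).HasOrthogonalProjection

theorem mapsTo_orthogonal (hA : IsSelfAdjoint A) {K : Submodule 𝕜 X} (hK : Set.MapsTo A K K) :
    Set.MapsTo A Kᗮ Kᗮ :=
  hA.isSymmetric.orthogonalComplement_mem_invtSubmodule hK

theorem commute_starProjection (hA : IsSelfAdjoint A) {K : Submodule 𝕜 X}
    [K.HasOrthogonalProjection] (hK : Set.MapsTo A K K) : Commute K.starProjection A := by
  rw [ContinuousLinearMap.IsIdempotentElem.commute_iff K.isIdempotentElem_starProjection,
    K.range_starProjection, K.ker_starProjection]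
  exact ⟨hK, mapsTo_orthogonal hA hK⟩

theorem tendsto_star_apply {ι : Type*} {l : Filter ι} {T : X →L[𝕜] X} [IsStarNormal T]
    (hA : IsSelfAdjoint A) (hT : Commute T A) {B : ι → X →L[𝕜] X}
    (hB : ∀ i, B i ∈ Algebra.adjoin 𝕜 {A}) {w : X} (h : Tendsto (fun i => B i w) l (𝓝 (T w))) :
    Tendsto (fun i => star (B i) w) l (𝓝 (star T w)) := by
  rw [tendsto_iff_norm_sub_tendsto_zero] at h ⊢
  refine h.congr fun i => ?_
  have hnormal := isStarNormal_sub_of_mem_adjoin_singleton hA hT (hB i)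
  have hnorm := ContinuousLinearMap.isStarNormal_iff_norm_eq_adjoint.mp hnormal w
  rwa [← ContinuousLinearMap.star_eq_adjoint, star_sub] at hnorm

theorem inner_apply_star_apply {C B : X →L[𝕜] X} (h : Commute C (star B)) (x y : X) :
    ⟪C (star B x), y⟫_𝕜 = ⟪C x, B y⟫_𝕜 := by
  have hCx : C (star B x) = star B (C x) := DFunLike.congr_fun h.eq x
  rw [hCx, ContinuousLinearMap.star_eq_adjoint, ContinuousLinearMap.adjoint_inner_left]

theorem commute_of_cyclicSubspace_eq_top (hA : IsSelfAdjoint A) {w : X}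
    (hw : cyclicSubspace A w = ⊤) {S T : X →L[𝕜] X} [IsStarNormal T] (hS : Commute S A)
    (hT : Commute T A) : Commute S T := by
  refine eq_of_commute_of_apply_eq hw (hS.mul_left hT) (hT.mul_left hS) ?_
  have hdense : Dense ((fun B : X →L[𝕜] X => B w) '' Algebra.adjoin 𝕜 {A}) := by
    rw [dense_iff_closure_eq, ← coe_cyclicSubspace_eq_closure_adjoin, hw, Submodule.top_coe]
  obtain ⟨y, hy, hlim⟩ := mem_closure_iff_seq_limit.mp (hdense (T w))
  choose B hB hBy using hy
  obtain rfl : (fun n => B n w) = y := funext hBy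
  refine hdense.eq_of_inner_right 𝕜 ?_
  rintro _ ⟨C, hC, rfl⟩
  have hC_star {U : X →L[𝕜] X} (hU : Commute U A) : Commute C (star U) :=
    (Algebra.commute_of_mem_adjoin_singleton_of_commute hC
      (commute_star_of_isSelfAdjoint hA hU)).symm
  have hinner (n : ℕ) : ⟪C w, S (B n w)⟫_𝕜 = ⟪C (star (B n) w), S w⟫_𝕜 := by
    have hSB : S (B n w) = B n (S w) :=
      DFunLike.congr_fun (Algebra.commute_of_mem_adjoin_singleton_of_commute (hB n) hS).eq w
    rw [hSB, inner_apply_star_apply (hC_star (Algebra.commute_of_mem_adjoin_self (hB n)).symm)]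
  have hST : Tendsto (fun n => ⟪C w, S (B n w)⟫_𝕜) atTop (𝓝 ⟪C w, S (T w)⟫_𝕜) :=
    tendsto_const_nhds.inner ((S.continuous.tendsto _).comp hlim)
  have hTS : Tendsto (fun n => ⟪C w, S (B n w)⟫_𝕜) atTop (𝓝 ⟪C w, T (S w)⟫_𝕜) := by
    simp only [hinner, ← inner_apply_star_apply (hC_star hT)]
    exact ((C.continuous.tendsto _).comp (tendsto_star_apply hA hT hB hlim)).inner
      tendsto_const_nhds
  exact tendsto_nhds_unique hST hTS

theorem apply_mem_cyclicSubspace_of_commute (hA : IsSelfAdjoint A) {w : X}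
    (hw : cyclicSubspace A w = ⊤) {T : X →L[𝕜] X} (hT : Commute T A) (u : X) :
    T u ∈ cyclicSubspace A u := by
  set Q := (cyclicSubspace A u).starProjection
  have : IsStarNormal Q := (isSelfAdjoint_starProjection _).isStarNormal
  have hTQ : Commute T Q := commute_of_cyclicSubspace_eq_top hA hw hT
    (commute_starProjection hA (mapsTo_cyclicSubspace A u))
  have hQu : Q u = u := Submodule.starProjection_eq_self_iff.mpr (self_mem_cyclicSubspace A u)
  rw [← Submodule.starProjection_eq_self_iff]
  calc Q (T u) = T (Q u) := (DFunLike.congr_fun hTQ.eq u).symm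
    _ = T u := congrArg T hQu

theorem cyclicSubspace_starProjection (hA : IsSelfAdjoint A) {w : X}
    (hw : cyclicSubspace A w = ⊤) {K : Submodule 𝕜 X} [K.HasOrthogonalProjection]
    (hK : Set.MapsTo A K K) : cyclicSubspace A (K.starProjection w) = K := by
  refine le_antisymm ?_ fun x hx => ?_
  · exact cyclicSubspace_le (K.orthogonal_orthogonal ▸ Kᗮ.isClosed_orthogonal) hK
      (K.starProjection_apply_mem w)
  · have hx' : K.starProjection x ∈ cyclicSubspace A (K.starProjection w) :=
      apply_mem_cyclicSubspace_apply (commute_starProjection hA hK) (hw ▸ Submodule.mem_top)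
    rwa [Submodule.starProjection_eq_self_iff.mpr hx] at hx'

theorem cyclicSubspace_add_eq_top (hA : IsSelfAdjoint A) {w : X} (hw : cyclicSubspace A w = ⊤)
    {p v : X} (hv : cyclicSubspace A v = (cyclicSubspace A p)ᗮ) :
    cyclicSubspace A (p + v) = ⊤ := by
  have hv_mem : v ∈ (cyclicSubspace A p)ᗮ := hv ▸ self_mem_cyclicSubspace A v
  have hproj : (cyclicSubspace A p).starProjection (p + v) = p :=
    Submodule.eq_starProjection_of_mem_orthogonal (self_mem_cyclicSubspace A p) (by simpa)
  have hp : p ∈ cyclicSubspace A (p + v) := by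
    have h := apply_mem_cyclicSubspace_of_commute hA hw
      (commute_starProjection hA (mapsTo_cyclicSubspace A p)) (p + v)
    rwa [hproj] at h
  have hv' : v ∈ cyclicSubspace A (p + v) :=
    (Submodule.add_mem_iff_right _ hp).mp (self_mem_cyclicSubspace A (p + v))
  rw [eq_top_iff, ← (cyclicSubspace A p).sup_orthogonal_of_hasOrthogonalProjection, ← hv]
  exact sup_le (cyclicSubspace_le_cyclicSubspace hp) (cyclicSubspace_le_cyclicSubspace hv')

theorem rank_one_perturbation_cyclic_general {R Rα : X →L[𝕜] X} (hR : IsSelfAdjoint R) (p : X)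
    {α : 𝕜} (hα : IsSelfAdjoint α) (hRα : Rα = R + α • rankOne 𝕜 p p) :
    cyclicSubspace R p = cyclicSubspace Rα p ∧
      ((∃ v, cyclicSubspace R v = ⊤) → (∃ v, cyclicSubspace Rα v = ⊤) →
        ∃ v₂ ∈ (cyclicSubspace R p)ᗮ,
          cyclicSubspace R (p + v₂) = ⊤ ∧ cyclicSubspace Rα (p + v₂) = ⊤) := by
  have hp : cyclicSubspace R p = cyclicSubspace Rα p :=
    cyclicSubspace_eq_of_sub_mem_span_singleton fun x => by
      simp [hRα, Submodule.smul_mem, Submodule.mem_span_singleton_self]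
  refine ⟨hp, fun ⟨w, hw⟩ ⟨wα, hwα⟩ => ?_⟩
  have hRα_sa : IsSelfAdjoint Rα :=
    hRα ▸ hR.add (hα.smul (isPositive_rankOne_self p).isSelfAdjoint)
  let v₂ := (cyclicSubspace R p)ᗮ.starProjection w
  have hv₂ : cyclicSubspace R v₂ = (cyclicSubspace R p)ᗮ :=
    cyclicSubspace_starProjection hR hw (mapsTo_orthogonal hR (mapsTo_cyclicSubspace R p))
  have hv₂_eq : cyclicSubspace R v₂ = cyclicSubspace Rα v₂ := cyclicSubspace_congr fun x hx => by
    have hpx : ⟪p, x⟫_𝕜 = 0 := (hv₂ ▸ hx) p (self_mem_cyclicSubspace R p)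
    simp [hRα, hpx]
  exact ⟨v₂, Submodule.starProjection_apply_mem _ w, cyclicSubspace_add_eq_top hR hw hv₂,
    cyclicSubspace_add_eq_top hRα_sa hwα (by rw [← hv₂_eq, hv₂, hp])⟩

end Hilbert

/-- **Cyclic subspaces under rank-one perturbation.** Let `R` be a bounded self-adjoint
operator on a complex Hilbert space and `Rα = R + α⟨·,p⟩p` a rank-one self-adjoint
perturbation. Then (1) the cyclic subspaces of `p` under `R` and under `Rα` coincide; and
(2) if both `R` and `Rα` have a cyclic vector, there is `v₂` orthogonal to `⟨p⟩_R` such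
that `p + v₂` is a common cyclic vector for `R` and `Rα`. -/
theorem rank_one_perturbation_cyclic
    {X : Type*} [NormedAddCommGroup X] [InnerProductSpace ℂ X] [CompleteSpace X]
    (R Rα : X →L[ℂ] X) (p : X) (α : ℝ)
    (hsa : IsSelfAdjoint R)
    (hRα : ∀ x : X, Rα x = R x + ((α : ℂ) * ⟪p, x⟫_ℂ) • p) :
    closure ((Submodule.span ℂ (Set.range fun n : ℕ => (R ^ n) p) : Submodule ℂ X) : Set X)
      = closure ((Submodule.span ℂ
          (Set.range fun n : ℕ => (Rα ^ n) p) : Submodule ℂ X) : Set X) ∧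
    ((∃ v : X, closure ((Submodule.span ℂ
          (Set.range fun n : ℕ => (R ^ n) v) : Submodule ℂ X) : Set X) = Set.univ) →
     (∃ v : X, closure ((Submodule.span ℂ
          (Set.range fun n : ℕ => (Rα ^ n) v) : Submodule ℂ X) : Set X) = Set.univ) →
     ∃ v₂ : X,
       (∀ x ∈ closure ((Submodule.span ℂ
            (Set.range fun n : ℕ => (R ^ n) p) : Submodule ℂ X) : Set X), ⟪x, v₂⟫_ℂ = 0) ∧
       closure ((Submodule.span ℂ
          (Set.range fun n : ℕ => (R ^ n) (p + v₂)) : Submodule ℂ X) : Set X) = Set.univ ∧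
       closure ((Submodule.span ℂ
          (Set.range fun n : ℕ => (Rα ^ n) (p + v₂)) : Submodule ℂ X) : Set X) = Set.univ) := by
  simpa only [← coe_cyclicSubspace, SetLike.coe_set_eq, Submodule.coe_eq_univ, SetLike.mem_coe,
    ← Submodule.mem_orthogonal] using rank_one_perturbation_cyclic_general (Rα := Rα) hsa p
      (Complex.conj_ofReal α) (by ext x; simp [hRα, mul_smul])
end

section
/- Let ρ, M, M̃ be as in the model context. Then there exists a unique bounded linear operator T on L²(ρ) satisfying T∘M = M̃ (T is the closure of M̃ M⁻¹ defined on the dense set Ran M); T is a contraction; and T is asymptotically stable: Tⁿ x → 0 for every x ∈ L²(ρ). -/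
open MeasureTheory Filter
open scoped InnerProductSpace ENNReal

/-!
Write `A = M̃`. Taking adjoints in `T M = A` gives `M T† = T M`, so `S M S† = S² M` for every real
polynomial `S` in `T`. With `S = T` this makes all `Tⁿ M` positive; with `S = 1 - T`, applied to
`Tⁿ M`, it makes the nonnegative sequence `n ↦ re ⟪Tⁿ M x, x⟫` convex. Being bounded, it decreases
to a limit, and `S = Tⁱ - Tʲ` then shows that `Tⁿ M x` is Cauchy. Its limit `y` is fixed by `T`,
hence by `T†` because `T` is a contraction, so `A y = M y`. Finally `A² = M² - ⟪𝟙, ·⟫ 𝟙` shows that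
`ker (M - A)` is invariant under `M` and orthogonal to `𝟙`, so its elements have no nonzero moments
and vanish by the Weierstrass approximation theorem.
-/

section RealSequence

theorem antitone_of_convex_of_bddAbove {a : ℕ → ℝ} (hconv : ∀ n, 2 * a (n + 1) ≤ a n + a (n + 2))
    (hbdd : BddAbove (Set.range a)) : Antitone a := by
  have hmono : Monotone fun n => a (n + 1) - a n :=
    monotone_nat_of_le_succ fun n => by linarith [hconv n]
  refine antitone_nat_of_succ_le fun n => ?_
  by_contra! hlt
  have hgrowth (k : ℕ) : a n + k * (a (n + 1) - a n) ≤ a (n + k) := by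
    induction k with
    | zero => simp
    | succ k ih =>
      have := hmono (Nat.le_add_right n k)
      rw [← Nat.add_assoc]
      push_cast
      linarith
  obtain ⟨C, hC⟩ := hbdd
  obtain ⟨k, hk⟩ := Archimedean.arch (C - a n + 1) (sub_pos.2 hlt)
  rw [nsmul_eq_mul] at hk
  linarith [hgrowth k, hC (Set.mem_range_self (n + k))]

end RealSequence

section StarSemigroup

variable {R : Type*} [Semigroup R] [StarMul R]

theorem semiconjBy_star_of_isSelfAdjoint_mul {m t : R} (hm : IsSelfAdjoint m)
    (htm : IsSelfAdjoint (t * m)) : SemiconjBy m (star t) t := by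
  simpa only [SemiconjBy, star_mul, hm.star_eq] using htm.star_eq

theorem mul_mul_star_eq_of_semiconjBy_star {m s : R} (hs : SemiconjBy m (star s) s) :
    s * m * star s = s * s * m := by
  rw [mul_assoc, hs.eq, mul_assoc]

end StarSemigroup

section NormedSpace

variable {𝕜 E F G : Type*} [NontriviallyNormedField 𝕜] [NormedAddCommGroup E] [NormedSpace 𝕜 E]
  [NormedAddCommGroup F] [NormedSpace 𝕜 F] [NormedAddCommGroup G] [NormedSpace 𝕜 G]

theorem existsUnique_comp_eq_of_norm_le [CompleteSpace G] {A : E →L[𝕜] F} {B : E →L[𝕜] G}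
    (hA : DenseRange A) {C : ℝ} (hle : ∀ x, ‖B x‖ ≤ C * ‖A x‖) :
    ∃! T : F →L[𝕜] G, T.comp A = B := by
  refine ⟨B.toLinearMap.extendOfNorm A.toLinearMap, ?_, fun T hT => ?_⟩
  · ext x
    exact LinearMap.extendOfNorm_eq (f := B.toLinearMap) (e := A.toLinearMap) hA ⟨C, hle⟩ x
  · exact (LinearMap.extendOfNorm_unique (e := A.toLinearMap) hA C hle T
      (congrArg ContinuousLinearMap.toLinearMap hT)).symm

theorem norm_le_of_norm_comp_le {A : E →L[𝕜] F} (hA : DenseRange A) {T : F →L[𝕜] G} {C : ℝ}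
    (hC : 0 ≤ C) (hle : ∀ x, ‖T (A x)‖ ≤ C * ‖A x‖) : ‖T‖ ≤ C :=
  T.opNorm_le_bound hC fun y =>
    hA.induction_on y (isClosed_le (by fun_prop) (by fun_prop)) hle

theorem norm_pow_le_one_of_norm_le_one {T : E →L[𝕜] E} (hT : ‖T‖ ≤ 1) (n : ℕ) : ‖T ^ n‖ ≤ 1 := by
  induction n with
  | zero => exact ContinuousLinearMap.norm_id_le
  | succ n ih =>
    rw [pow_succ]
    exact (norm_mul_le _ _).trans (mul_le_one₀ ih (norm_nonneg T) hT)

theorem tendsto_pow_apply_zero_of_denseRange {ι : Type*} {T : E →L[𝕜] E} (hT : ‖T‖ ≤ 1) {g : ι → E}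
    (hg : DenseRange g) (h : ∀ i, Tendsto (fun n : ℕ => (T ^ n) (g i)) atTop (nhds 0)) (x : E) :
    Tendsto (fun n : ℕ => (T ^ n) x) atTop (nhds 0) := by
  have hequi : Equicontinuous fun (n : ℕ) x => (T ^ n) x :=
    (LipschitzWith.uniformEquicontinuous _ 1 fun n =>
      (T ^ n).lipschitz.weaken (norm_pow_le_one_of_norm_le_one hT n)).equicontinuous
  exact hg.induction_on x (hequi.isClosed_setOfPred_tendsto continuous_const) h

end NormedSpace

section HilbertSpace

variable {𝕜 H : Type*} [RCLike 𝕜] [NormedAddCommGroup H] [InnerProductSpace 𝕜 H]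

theorem norm_apply_sq_le_of_isPositive {M : H →L[𝕜] H} (hM : M.IsPositive) (x : H) :
    ‖M x‖ ^ 2 ≤ ‖M‖ * M.reApplyInnerSelf x := by
  rcases (norm_nonneg M).eq_or_lt with hzero | hpos
  · simp [norm_eq_zero.1 hzero.symm]
  have hMM : RCLike.re ⟪M (M x), M x⟫_𝕜 ≤ ‖M‖ * ‖M x‖ ^ 2 :=
    calc RCLike.re ⟪M (M x), M x⟫_𝕜 ≤ ‖M (M x)‖ * ‖M x‖ := re_inner_le_norm _ _
      _ ≤ ‖M‖ * ‖M x‖ * ‖M x‖ := by gcongr; exact M.le_opNorm _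
      _ = ‖M‖ * ‖M x‖ ^ 2 := by ring
  have hquad := hM.re_inner_nonneg_left ((‖M‖ : 𝕜) • x - M x)
  have hexpand : RCLike.re ⟪M ((‖M‖ : 𝕜) • x - M x), (‖M‖ : 𝕜) • x - M x⟫_𝕜 =
      ‖M‖ ^ 2 * M.reApplyInnerSelf x - 2 * ‖M‖ * ‖M x‖ ^ 2 + RCLike.re ⟪M (M x), M x⟫_𝕜 := by
    simp only [map_sub, map_smul, inner_sub_left, inner_sub_right, inner_smul_left,
      inner_smul_right, RCLike.conj_ofReal, RCLike.re_ofReal_mul,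
      hM.inner_left_eq_inner_right (M x) x, inner_self_eq_norm_sq,
      ContinuousLinearMap.reApplyInnerSelf_apply]
    ring
  nlinarith

theorem reApplyInnerSelf_sub_mul_sub_mul {S U : H →L[𝕜] H} (hSU : Commute S U) (M : H →L[𝕜] H)
    (x : H) :
    ((S - U) * (S - U) * M).reApplyInnerSelf x = (S * S * M).reApplyInnerSelf x -
      2 * (S * U * M).reApplyInnerSelf x + (U * U * M).reApplyInnerSelf x := by
  have hexpand : (S - U) * (S - U) * M = S * S * M - S * U * M - S * U * M + U * U * M := by
    simp only [sub_mul, mul_sub, ← hSU.eq]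
    abel
  simp only [hexpand, ContinuousLinearMap.reApplyInnerSelf_apply, add_apply, sub_apply,
    inner_add_left, inner_sub_left, map_add, map_sub]
  ring

variable [CompleteSpace H]

theorem adjoint_apply_eq_self_of_apply_eq_self {T : H →L[𝕜] H} (hT : ‖T‖ ≤ 1) {x : H}
    (hx : T x = x) : ContinuousLinearMap.adjoint T x = x := by
  refine eq_of_norm_le_re_inner_eq_norm_sq (𝕜 := 𝕜) ?_ ?_
  · refine (ContinuousLinearMap.le_of_opNorm_le _ ?_ x).trans_eq (one_mul _)
    rwa [LinearIsometryEquiv.norm_map]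
  · rw [ContinuousLinearMap.adjoint_inner_left, hx, inner_self_eq_norm_sq]

theorem denseRange_of_isSymmetric_of_injective {M : H →L[𝕜] H} (hM : M.IsSymmetric)
    (hinj : Function.Injective M) : DenseRange M := by
  have hbot : M.rangeᗮ = ⊥ := by
    rw [hM.orthogonal_range, LinearMap.ker_eq_bot]
    exact hinj
  exact Submodule.dense_iff_topologicalClosure_eq_top.2
    (Submodule.topologicalClosure_eq_top_iff.2 hbot)

theorem isPositive_mul_self_mul {M S : H →L[𝕜] H} (hM : M.IsPositive)
    (hS : SemiconjBy M (star S) S) : (S * S * M).IsPositive := by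
  rw [← mul_mul_star_eq_of_semiconjBy_star hS]
  exact hM.conj_adjoint S

theorem norm_mul_apply_sq_le {M S : H →L[𝕜] H} (hM : M.IsPositive)
    (hS : SemiconjBy M (star S) S) (x : H) :
    ‖(S * M) x‖ ^ 2 ≤ ‖M‖ * (S * S * M).reApplyInnerSelf x := by
  calc ‖(S * M) x‖ ^ 2 = ‖M (star S x)‖ ^ 2 := by rw [← hS.eq, mul_apply_eq_comp]
    _ ≤ ‖M‖ * M.reApplyInnerSelf (star S x) := norm_apply_sq_le_of_isPositive hM _
    _ = ‖M‖ * (S * M * star S).reApplyInnerSelf x := by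
      simp only [ContinuousLinearMap.reApplyInnerSelf_apply, mul_apply_eq_comp,
        ContinuousLinearMap.star_eq_adjoint, ContinuousLinearMap.adjoint_inner_right]
    _ = ‖M‖ * (S * S * M).reApplyInnerSelf x := by rw [mul_mul_star_eq_of_semiconjBy_star hS]

section Contraction

variable {M T : H →L[𝕜] H}

theorem isPositive_pow_mul (hM : M.IsPositive) (hTM : (T * M).IsPositive) (n : ℕ) :
    (T ^ n * M).IsPositive := by
  induction n using Nat.twoStepInduction with
  | zero => simpa
  | one => simpa
  | more n ih _ =>
    have hsemi := semiconjBy_star_of_isSelfAdjoint_mul hM.isSelfAdjoint hTM.isSelfAdjoint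
    have hpow : SemiconjBy (T ^ n * M) (star T) T :=
      SemiconjBy.mul_left (Commute.pow_self T n) hsemi
    simpa only [pow_succ', mul_assoc] using isPositive_mul_self_mul ih hpow

theorem antitone_reApplyInnerSelf_pow_mul (hM : M.IsPositive) (hTM : (T * M).IsPositive)
    (hT : ‖T‖ ≤ 1) (x : H) : Antitone fun n => (T ^ n * M).reApplyInnerSelf x := by
  refine antitone_of_convex_of_bddAbove (fun n => ?_) ⟨‖M‖ * ‖x‖ * ‖x‖, ?_⟩
  · have hsemi := semiconjBy_star_of_isSelfAdjoint_mul hM.isSelfAdjoint hTM.isSelfAdjoint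
    have hpow : SemiconjBy (T ^ n * M) (star (1 - T)) (1 - T) := by
      rw [star_sub, star_one]
      exact (SemiconjBy.one_right _).sub_right (SemiconjBy.mul_left (Commute.pow_self T n) hsemi)
    have hnonneg := (isPositive_mul_self_mul (isPositive_pow_mul hM hTM n) hpow).2 x
    rw [reApplyInnerSelf_sub_mul_sub_mul (Commute.one_left T)] at hnonneg
    simp only [one_mul, mul_assoc] at hnonneg
    simp only [pow_succ', mul_assoc]
    linarith
  · rintro _ ⟨n, rfl⟩
    calc RCLike.re ⟪(T ^ n) (M x), x⟫_𝕜 ≤ ‖(T ^ n) (M x)‖ * ‖x‖ := re_inner_le_norm _ _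
      _ ≤ ‖M‖ * ‖x‖ * ‖x‖ := by
        gcongr
        exact ((T ^ n).le_of_opNorm_le (norm_pow_le_one_of_norm_le_one hT n) _).trans
          ((one_mul _).trans_le (M.le_opNorm x))

theorem cauchySeq_pow_apply_of_isPositive_mul (hM : M.IsPositive) (hTM : (T * M).IsPositive)
    (hT : ‖T‖ ≤ 1) (x : H) : CauchySeq fun n => (T ^ n) (M x) := by
  set e : ℕ → ℝ := fun n => (T ^ n * M).reApplyInnerSelf x with he
  obtain ⟨L, hL⟩ : ∃ L, Tendsto e atTop (nhds L) :=
    ⟨_, tendsto_atTop_ciInf (antitone_reApplyInnerSelf_pow_mul hM hTM hT x)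
      ⟨0, Set.forall_mem_range.2 fun n => (isPositive_pow_mul hM hTM n).2 x⟩⟩
  have hdist (p : ℕ × ℕ) : dist ((T ^ p.1) (M x)) ((T ^ p.2) (M x)) ≤
      √(‖M‖ * (e (p.1 + p.1) - 2 * e (p.1 + p.2) + e (p.2 + p.2))) := by
    have hsemi := semiconjBy_star_of_isSelfAdjoint_mul hM.isSelfAdjoint hTM.isSelfAdjoint
    have hsub : SemiconjBy M (star (T ^ p.1 - T ^ p.2)) (T ^ p.1 - T ^ p.2) := by
      rw [star_sub, star_pow, star_pow]
      exact (hsemi.pow_right _).sub_right (hsemi.pow_right _)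
    refine Real.le_sqrt_of_sq_le ?_
    have := norm_mul_apply_sq_le hM hsub x
    rw [reApplyInnerSelf_sub_mul_sub_mul (Commute.pow_pow_self T _ _)] at this
    simpa only [dist_eq_norm, he, pow_add, mul_apply_eq_comp, sub_apply] using this
  have hfst : Tendsto (Prod.fst : ℕ × ℕ → ℕ) atTop atTop := by
    rw [← prod_atTop_atTop_eq]; exact tendsto_fst
  have hsnd : Tendsto (Prod.snd : ℕ × ℕ → ℕ) atTop atTop := by
    rw [← prod_atTop_atTop_eq]; exact tendsto_snd
  refine cauchySeq_iff_tendsto_dist_atTop_0.2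
    (squeeze_zero (fun _ => dist_nonneg) hdist ?_)
  have hlim := ((((hL.comp (hfst.atTop_add_atTop hfst)).sub
    ((hL.comp (hfst.atTop_add_atTop hsnd)).const_mul 2)).add
    (hL.comp (hsnd.atTop_add_atTop hsnd))).const_mul ‖M‖).sqrt
  rwa [show L - 2 * L + L = 0 by ring, mul_zero, Real.sqrt_zero] at hlim

theorem tendsto_pow_apply_zero_of_isPositive_mul (hM : M.IsPositive) (hTM : (T * M).IsPositive)
    (hT : ‖T‖ ≤ 1) (hdense : DenseRange M) (hfix : ∀ y, T y = y → y = 0) (x : H) :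
    Tendsto (fun n : ℕ => (T ^ n) x) atTop (nhds 0) := by
  refine tendsto_pow_apply_zero_of_denseRange hT hdense (fun u => ?_) x
  obtain ⟨y, hy⟩ := cauchySeq_tendsto_of_complete
    (cauchySeq_pow_apply_of_isPositive_mul hM hTM hT u)
  have hTy : T y = y := by
    refine tendsto_nhds_unique (((T.continuous.tendsto y).comp hy).congr fun n => ?_)
      (hy.comp (tendsto_add_atTop_nat 1))
    simp only [Function.comp_apply, pow_succ', mul_apply_eq_comp]
  rwa [hfix y hTy] at hy

end Contraction

theorem Sigma0_asymptotically_stable_general {M Mt : H →L[𝕜] H} (hM : M.IsPositive)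
    (hMt : Mt.IsPositive) (hle : ∀ x, ‖Mt x‖ ≤ ‖M x‖) (hker : ∀ x, Mt x = M x → x = 0) :
    (∃! T : H →L[𝕜] H, T.comp M = Mt) ∧
    ∀ T : H →L[𝕜] H, T.comp M = Mt →
      ‖T‖ ≤ 1 ∧ ∀ x, Tendsto (fun n : ℕ => (T ^ n) x) atTop (nhds 0) := by
  have hinj : Function.Injective M := (injective_iff_map_eq_zero M).2 fun x hx => by
    have hMtx : Mt x = 0 := by simpa [hx] using hle x
    exact hker x (hMtx.trans hx.symm)
  have hdense := denseRange_of_isSymmetric_of_injective hM.isSymmetric hinj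
  refine ⟨existsUnique_comp_eq_of_norm_le hdense (C := 1) (by simpa using hle), ?_⟩
  rintro T rfl
  have hT : ‖T‖ ≤ 1 := norm_le_of_norm_comp_le hdense zero_le_one (by simpa using hle)
  refine ⟨hT, tendsto_pow_apply_zero_of_isPositive_mul hM hMt hT hdense fun y hy => hker y ?_⟩
  have hsemi := semiconjBy_star_of_isSelfAdjoint_mul hM.isSelfAdjoint hMt.isSelfAdjoint
  calc T (M y) = M (ContinuousLinearMap.adjoint T y) := (DFunLike.congr_fun hsemi.eq y).symm
    _ = M y := by rw [adjoint_apply_eq_self_of_apply_eq_self hT hy]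

end HilbertSpace

section RankOnePerturbation

variable {𝕜 H : Type*} [RCLike 𝕜] [NormedAddCommGroup H] [InnerProductSpace 𝕜 H]
  {M Mt : H →L[𝕜] H} {e : H}

theorem norm_apply_sq_add_norm_inner_sq (hM : M.IsSymmetric) (hMt : Mt.IsSymmetric)
    (hsq : ∀ x, Mt (Mt x) = M (M x) - ⟪e, x⟫_𝕜 • e) (x : H) :
    ‖Mt x‖ ^ 2 + ‖⟪e, x⟫_𝕜‖ ^ 2 = ‖M x‖ ^ 2 := by
  have hinner : ⟪Mt x, Mt x⟫_𝕜 = ⟪M x, M x⟫_𝕜 - ⟪e, x⟫_𝕜 * ⟪x, e⟫_𝕜 :=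
    calc ⟪Mt x, Mt x⟫_𝕜 = ⟪x, Mt (Mt x)⟫_𝕜 := hMt x (Mt x)
      _ = ⟪x, M (M x)⟫_𝕜 - ⟪e, x⟫_𝕜 * ⟪x, e⟫_𝕜 := by
        rw [hsq, inner_sub_right, inner_smul_right]
      _ = ⟪M x, M x⟫_𝕜 - ⟪e, x⟫_𝕜 * ⟪x, e⟫_𝕜 := congrArg (· - _) (hM x (M x)).symm
  have hre := congrArg RCLike.re hinner
  rw [map_sub, inner_self_eq_norm_sq, inner_self_eq_norm_sq, inner_mul_symm_re_eq_norm,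
    norm_mul, norm_inner_symm x e] at hre
  linarith

theorem norm_apply_le_of_sq_eq_sub_rankOne (hM : M.IsSymmetric) (hMt : Mt.IsSymmetric)
    (hsq : ∀ x, Mt (Mt x) = M (M x) - ⟪e, x⟫_𝕜 • e) (x : H) : ‖Mt x‖ ≤ ‖M x‖ := by
  refine le_of_sq_le_sq ?_ (norm_nonneg _)
  linarith [norm_apply_sq_add_norm_inner_sq hM hMt hsq x, sq_nonneg ‖⟪e, x⟫_𝕜‖]

theorem inner_pow_apply_eq_zero_of_apply_eq (hM : M.IsSymmetric) (hMt : Mt.IsSymmetric)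
    (hsq : ∀ x, Mt (Mt x) = M (M x) - ⟪e, x⟫_𝕜 • e) {x : H} (hx : Mt x = M x) (n : ℕ) :
    ⟪e, (M ^ n) x⟫_𝕜 = 0 := by
  have horth {y : H} (hy : Mt y = M y) : ⟪e, y⟫_𝕜 = 0 := by
    have := norm_apply_sq_add_norm_inner_sq hM hMt hsq y
    rwa [hy, add_eq_left, sq_eq_zero_iff, norm_eq_zero] at this
  have hinvariant : Mt ((M ^ n) x) = M ((M ^ n) x) := by
    induction n with
    | zero => exact hx
    | succ n ih =>
      rw [pow_succ', mul_apply_eq_comp]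
      calc Mt (M ((M ^ n) x)) = Mt (Mt ((M ^ n) x)) := by rw [ih]
        _ = M (M ((M ^ n) x)) := by rw [hsq, horth ih, zero_smul, sub_zero]
  exact horth hinvariant

end RankOnePerturbation

section MultiplicationOperator

variable {α 𝕜 E : Type*} [MeasurableSpace α] {μ : Measure α} [RCLike 𝕜] [NormedAddCommGroup E]
  [InnerProductSpace 𝕜 E]

/-- `M` acts on `L²(μ; E)` as multiplication by the real function `φ`. Characterising a given
bounded operator avoids having to build one out of an essential bound on `φ`. -/
def IsMultiplicationBy (M : Lp E 2 μ →L[𝕜] Lp E 2 μ) (φ : α → ℝ) : Prop :=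
  ∀ f : Lp E 2 μ, ∀ᵐ s ∂μ, M f s = (φ s : 𝕜) • f s

namespace IsMultiplicationBy

variable {M : Lp E 2 μ →L[𝕜] Lp E 2 μ} {φ : α → ℝ}

theorem isPositive (hM : IsMultiplicationBy M φ) (hφ : ∀ᵐ s ∂μ, 0 ≤ φ s) : M.IsPositive := by
  refine ⟨fun f g => ?_, fun f => ?_⟩
  · simp only [ContinuousLinearMap.coe_coe, L2.inner_def]
    refine integral_congr_ae ?_
    filter_upwards [hM f, hM g] with s hf hg
    rw [hf, hg, inner_smul_left, inner_smul_right, RCLike.conj_ofReal]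
  · rw [ContinuousLinearMap.reApplyInnerSelf_apply, L2.inner_def,
      ← integral_re (L2.integrable_inner _ _)]
    refine integral_nonneg_of_ae ?_
    filter_upwards [hM f, hφ] with s hf hs
    rw [hf, inner_smul_left, RCLike.conj_ofReal, RCLike.re_ofReal_mul]
    exact mul_nonneg hs inner_self_nonneg

theorem pow (hM : IsMultiplicationBy M φ) (n : ℕ) : IsMultiplicationBy (M ^ n) (φ ^ n) := by
  intro f
  induction n with
  | zero => simp
  | succ n ih =>
    filter_upwards [hM ((M ^ n) f), ih] with s hs hn
    rw [pow_succ', mul_apply_eq_comp, hs, hn, pow_succ', Pi.mul_apply, RCLike.ofReal_mul, mul_smul]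

end IsMultiplicationBy

end MultiplicationOperator

section MomentProblem

variable {E : Type*} [NormedAddCommGroup E] [NormedSpace ℝ E] {μ : Measure ℝ} {a b : ℝ} {f : ℝ → E}

theorem integrable_smul_of_continuous (hsupp : ∀ᵐ s ∂μ, s ∈ Set.Icc a b) (hf : Integrable f μ)
    {g : ℝ → ℝ} (hg : Continuous g) : Integrable (fun s => g s • f s) μ := by
  obtain ⟨C, hC⟩ := isCompact_Icc.exists_bound_of_continuousOn (hg.continuousOn (s := Set.Icc a b))
  refine hf.bdd_smul C hg.aestronglyMeasurable ?_
  filter_upwards [hsupp] with s hs using hC s hs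

theorem integral_polynomial_smul_eq_zero (hsupp : ∀ᵐ s ∂μ, s ∈ Set.Icc a b) (hf : Integrable f μ)
    (hmoment : ∀ n : ℕ, ∫ s, s ^ n • f s ∂μ = 0) (p : Polynomial ℝ) :
    ∫ s, p.eval s • f s ∂μ = 0 := by
  simp only [Polynomial.eval_eq_sum_range, Finset.sum_smul, mul_smul]
  have hint (n : ℕ) : Integrable (fun s => p.coeff n • s ^ n • f s) μ :=
    (integrable_smul_of_continuous hsupp hf (continuous_pow n)).smul (p.coeff n)
  rw [integral_finsetSum _ fun n _ => hint n]
  simp only [integral_smul, hmoment, smul_zero, Finset.sum_const_zero]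

theorem integral_continuous_smul_eq_zero (hsupp : ∀ᵐ s ∂μ, s ∈ Set.Icc a b) (hf : Integrable f μ)
    (hmoment : ∀ n : ℕ, ∫ s, s ^ n • f s ∂μ = 0) {g : ℝ → ℝ} (hg : Continuous g) :
    ∫ s, g s • f s ∂μ = 0 := by
  have hbound (ε : ℝ) (hε : 0 < ε) : ‖∫ s, g s • f s ∂μ‖ ≤ ε * ∫ s, ‖f s‖ ∂μ := by
    obtain ⟨p, hp⟩ := exists_polynomial_near_of_continuousOn a b g hg.continuousOn ε hε
    calc ‖∫ s, g s • f s ∂μ‖ = ‖∫ s, (p.eval s • f s - g s • f s) ∂μ‖ := by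
          rw [integral_sub (integrable_smul_of_continuous hsupp hf p.continuous)
            (integrable_smul_of_continuous hsupp hf hg),
            integral_polynomial_smul_eq_zero hsupp hf hmoment, zero_sub, norm_neg]
      _ ≤ ∫ s, ε * ‖f s‖ ∂μ := by
          refine norm_integral_le_of_norm_le (hf.norm.const_mul ε) ?_
          filter_upwards [hsupp] with s hs
          rw [← sub_smul, norm_smul, Real.norm_eq_abs]
          gcongr
          exact (hp s hs).le
      _ = ε * ∫ s, ‖f s‖ ∂μ := integral_const_mul _ _
  have hlim : Tendsto (fun ε : ℝ => ε * ∫ s, ‖f s‖ ∂μ) (nhdsWithin 0 (Set.Ioi 0)) (nhds 0) := by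
    refine Tendsto.mono_left ?_ nhdsWithin_le_nhds
    exact (continuous_mul_const _).tendsto' 0 0 (zero_mul _)
  refine norm_le_zero_iff.1 (ge_of_tendsto hlim ?_)
  filter_upwards [self_mem_nhdsWithin] with ε hε using hbound ε hε

theorem ae_eq_zero_of_forall_moment_eq_zero [CompleteSpace E] (hsupp : ∀ᵐ s ∂μ, s ∈ Set.Icc a b)
    (hf : Integrable f μ) (hmoment : ∀ n : ℕ, ∫ s, s ^ n • f s ∂μ = 0) : ∀ᵐ s ∂μ, f s = 0 :=
  ae_eq_zero_of_integral_contDiff_smul_eq_zero hf.locallyIntegrable fun _ hg _ =>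
    integral_continuous_smul_eq_zero hsupp hf hmoment hg.continuous

end MomentProblem

theorem eq_zero_of_forall_inner_pow_apply_eq_zero {𝕜 : Type*} [RCLike 𝕜] {ρ : Measure ℝ}
    [IsFiniteMeasure ρ] {a b : ℝ} (hsupp : ∀ᵐ s ∂ρ, s ∈ Set.Icc a b) {one : Lp 𝕜 2 ρ}
    (hone : ∀ᵐ s ∂ρ, one s = 1) {M : Lp 𝕜 2 ρ →L[𝕜] Lp 𝕜 2 ρ} (hM : IsMultiplicationBy M id)
    {f : Lp 𝕜 2 ρ} (horth : ∀ n : ℕ, ⟪one, (M ^ n) f⟫_𝕜 = 0) : f = 0 := by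
  rw [Lp.eq_zero_iff_ae_eq_zero]
  refine ae_eq_zero_of_forall_moment_eq_zero hsupp
    ((Lp.memLp f).integrable one_le_two) fun n => ?_
  rw [← horth n, L2.inner_def]
  refine integral_congr_ae ?_
  filter_upwards [hone, hM.pow n f] with s hs hn
  rw [hs, hn, RCLike.inner_apply, map_one, mul_one]
  simp [RCLike.real_smul_eq_coe_mul]

/-- **The operator `Σ₀* = M̃ M⁻¹` is an asymptotically stable contraction.** In the model
`L²(ρ)` (with `ρ` a finite measure of bounded support on `(0,∞)` satisfying
`∫ s⁻² dρ ≤ 1`, `M` multiplication by `s`, and `M̃ = (M² − ⟨·,𝟙⟩𝟙)^{1/2}`), there is a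
unique bounded operator `T` with `T∘M = M̃`; it is a contraction and it is asymptotically
stable: `Tⁿ x → 0` for every `x ∈ L²(ρ)`. -/
theorem Sigma0_asymptotically_stable
    (ρ : Measure ℝ) [IsFiniteMeasure ρ]
    (hcarr : ρ {s : ℝ | s ≤ 0} = 0)
    (hbddsupp : ∃ b : ℝ, ρ {s : ℝ | b < s} = 0)
    (hnorm : ∫⁻ s, ENNReal.ofReal (s⁻¹ ^ 2) ∂ρ ≤ 1)
    (one : Lp ℂ 2 ρ)
    (hone : ∀ᵐ s ∂ρ, (one : ℝ → ℂ) s = 1)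
    (M Mt : Lp ℂ 2 ρ →L[ℂ] Lp ℂ 2 ρ)
    (hM : ∀ f : Lp ℂ 2 ρ, ∀ᵐ s ∂ρ, (M f : ℝ → ℂ) s = (s : ℂ) * (f : ℝ → ℂ) s)
    (hMt_pos : Mt.IsPositive)
    (hMt_sq : ∀ f, Mt (Mt f) = M (M f) - ⟪one, f⟫_ℂ • one) :
    (∃! T : Lp ℂ 2 ρ →L[ℂ] Lp ℂ 2 ρ, T.comp M = Mt) ∧
    ∀ T : Lp ℂ 2 ρ →L[ℂ] Lp ℂ 2 ρ, T.comp M = Mt →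
      ‖T‖ ≤ 1 ∧
      (∀ x : Lp ℂ 2 ρ, Tendsto (fun n : ℕ => (T ^ n) x) atTop (nhds 0)) := by
  obtain ⟨b, hb⟩ := hbddsupp
  have hpos : ∀ᵐ s ∂ρ, 0 < s := by simpa [ae_iff] using hcarr
  have hle : ∀ᵐ s ∂ρ, s ≤ b := by simpa [ae_iff] using hb
  have hsupp : ∀ᵐ s ∂ρ, s ∈ Set.Icc 0 b := by
    filter_upwards [hpos, hle] with s h0 h1 using ⟨h0.le, h1⟩
  have hmul : IsMultiplicationBy M id := hM
  have hM_pos : M.IsPositive := hmul.isPositive (hpos.mono fun _ => le_of_lt)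
  exact Sigma0_asymptotically_stable_general hM_pos hMt_pos
    (norm_apply_le_of_sq_eq_sub_rankOne hM_pos.isSymmetric hMt_pos.isSymmetric hMt_sq)
    fun _ hx => eq_zero_of_forall_inner_pow_apply_eq_zero hsupp hone hmul
      (inner_pow_apply_eq_zero_of_apply_eq hM_pos.isSymmetric hMt_pos.isSymmetric hMt_sq hx)
end
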